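/- The interaction improvement ⊑int·imp on ordinary λ-terms is a consistent inequational λ-theory (a compatible preorder containing β-conversion, different from the total relation). -/

import Mathlib

set_option autoImplicit false

/-! ### Players -/

inductive Player : Type
  | white
  | black
deriving DecidableEq

/-- The opposite player. -/
def Player.op : Player → Player
  | .white => .black
  | .black => .white

/-- `gamma p q` is `0` if the players agree (silent) and `1` otherwise (interaction). -/
def Player.gamma (p q : Player) : ℕ := if p = q then 0 else 1

/-! ### Ordinary λ-terms (de Bruijn representation) -/

inductive Lam : Type
  | var : ℕ → Lam
  | lam : Lam → Lam
  | app : Lam → Lam → Lam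
deriving DecidableEq

namespace Lam

/-- Shift the free de Bruijn indices ≥ `d` by one. -/
def liftAt : Lam → ℕ → Lam
  | .var n, d => .var (if n < d then n else n + 1)
  | .lam t, d => .lam (t.liftAt (d + 1))
  | .app t u, d => .app (t.liftAt d) (u.liftAt d)

/-- Capture-avoiding substitution of `u` for the de Bruijn index `x`. -/
def subst : Lam → ℕ → Lam → Lam
  | .var n, x, u => if n = x then u else if x < n then .var (n - 1) else .var n
  | .lam t, x, u => .lam (t.subst (x + 1) (u.liftAt 0))
  | .app t s, x, u => .app (t.subst x u) (s.subst x u)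

end Lam

/-- Root β-rule: `(λx.t) u ↦ t[x:=u]`. -/
inductive LBetaRoot : Lam → Lam → Prop
  | beta (t u : Lam) : LBetaRoot (.app (.lam t) u) (t.subst 0 u)

/-- Root η-rule: `λx. t x ↦ t` with `x ∉ FV(t)` (enforced by the lifting). -/
inductive LEtaRoot : Lam → Lam → Prop
  | eta (t : Lam) : LEtaRoot (.lam (.app (t.liftAt 0) (.var 0))) t

/-- Closure of a root relation under all contexts. -/
inductive LFull (R : Lam → Lam → Prop) : Lam → Lam → Prop
  | root {t u : Lam} : R t u → LFull R t u
  | lam {t u : Lam} : LFull R t u → LFull R (.lam t) (.lam u)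
  | appL {t t' : Lam} (u : Lam) : LFull R t t' → LFull R (.app t u) (.app t' u)
  | appR (t : Lam) {u u' : Lam} : LFull R u u' → LFull R (.app t u) (.app t u')

/-- Closure under applicative spine contexts `⟨·⟩ t1 … tk`. -/
inductive LSpine (R : Lam → Lam → Prop) : Lam → Lam → Prop
  | root {t u : Lam} : R t u → LSpine R t u
  | appL {t t' : Lam} (u : Lam) : LSpine R t t' → LSpine R (.app t u) (.app t' u)

/-- Closure under head contexts `λx1…xn.⟨·⟩ t1 … tk`. -/
inductive LHead (R : Lam → Lam → Prop) : Lam → Lam → Prop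
  | spine {t u : Lam} : LSpine R t u → LHead R t u
  | lam {t u : Lam} : LHead R t u → LHead R (.lam t) (.lam u)

/-- β-reduction. -/
def LBeta : Lam → Lam → Prop := LFull LBetaRoot
/-- η-reduction. -/
def LEta : Lam → Lam → Prop := LFull LEtaRoot
/-- Head reduction. -/
def LHStep : Lam → Lam → Prop := LHead LBetaRoot
/-- Multistep head reduction. -/
def LHSteps : Lam → Lam → Prop := Relation.ReflTransGen LHStep

/-- β-conversion (reflexive-symmetric-transitive closure of β-reduction). -/
def LBetaConv : Lam → Lam → Prop :=
  Relation.ReflTransGen (fun a b => LBeta a b ∨ LBeta b a)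
/-- η-conversion. -/
def LEtaConv : Lam → Lam → Prop :=
  Relation.ReflTransGen (fun a b => LEta a b ∨ LEta b a)

/-- Head normal forms: no head step out of `t`. -/
def Lam.LHNF (t : Lam) : Prop := ∀ u, ¬ LHStep t u

/-- Head convergence: `t ⇓h`. -/
def Lam.HConv (t : Lam) : Prop := ∃ h, LHSteps t h ∧ h.LHNF

/-- Ordinary contexts (one hole). -/
inductive LCtx : Type
  | hole : LCtx
  | lam : LCtx → LCtx
  | appL : LCtx → Lam → LCtx
  | appR : Lam → LCtx → LCtx

/-- Plugging (allowing variable capture). -/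
def LCtx.fill : LCtx → Lam → Lam
  | .hole, t => t
  | .lam C, t => .lam (C.fill t)
  | .appL C u, t => .app (C.fill t) u
  | .appR s C, t => .app s (C.fill t)

/-- Head contextual preorder on λ-terms. -/
def CtxLe (t u : Lam) : Prop := ∀ C : LCtx, (C.fill t).HConv → (C.fill u).HConv

/-! ### Checkers terms -/

inductive CTerm : Type
  | var : ℕ → CTerm
  | lam : Player → CTerm → CTerm
  | app : Player → CTerm → CTerm → CTerm
deriving DecidableEq

namespace CTerm

/-- Shift the free de Bruijn indices ≥ `d` by one. -/
def liftAt : CTerm → ℕ → CTerm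
  | .var n, d => .var (if n < d then n else n + 1)
  | .lam p t, d => .lam p (t.liftAt (d + 1))
  | .app p t u, d => .app p (t.liftAt d) (u.liftAt d)

/-- Capture-avoiding substitution of `u` for the de Bruijn index `x`. -/
def subst : CTerm → ℕ → CTerm → CTerm
  | .var n, x, u => if n = x then u else if x < n then .var (n - 1) else .var n
  | .lam p t, x, u => .lam p (t.subst (x + 1) (u.liftAt 0))
  | .app p t s, x, u => .app p (t.subst x u) (s.subst x u)

/-- The underlying ordinary λ-term of a checkers term. -/
def untag : CTerm → Lam
  | .var n => .var n
  | .lam _ t => .lam t.untag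
  | .app _ t u => .app t.untag u.untag

end CTerm

/-- Player lifting: tag every abstraction and application with player `p`. -/
def Lam.tag : Lam → Player → CTerm
  | .var n, _ => .var n
  | .lam t, p => .lam p (t.tag p)
  | .app t u, p => .app p (t.tag p) (u.tag p)

/-- Silent β root rule: the abstraction and the application carry the same player. -/
inductive SilentRoot : CTerm → CTerm → Prop
  | beta (p : Player) (t u : CTerm) : SilentRoot (.app p (.lam p t) u) (t.subst 0 u)

/-- Interaction β root rule: the application carries the opposite player of the abstraction. -/
inductive InterRoot : CTerm → CTerm → Prop
  | beta (p : Player) (t u : CTerm) : InterRoot (.app p.op (.lam p t) u) (t.subst 0 u)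

/-- Closure of a root relation under all checkers contexts. -/
inductive CFull (R : CTerm → CTerm → Prop) : CTerm → CTerm → Prop
  | root {t u : CTerm} : R t u → CFull R t u
  | lam (p : Player) {t u : CTerm} : CFull R t u → CFull R (.lam p t) (.lam p u)
  | appL (p : Player) {t t' : CTerm} (u : CTerm) : CFull R t t' → CFull R (.app p t u) (.app p t' u)
  | appR (p : Player) (t : CTerm) {u u' : CTerm} : CFull R u u' → CFull R (.app p t u) (.app p t u')

/-- Closure under applicative spine contexts `⟨·⟩ @_{q1} t1 … @_{qk} tk`. -/
inductive CSpine (R : CTerm → CTerm → Prop) : CTerm → CTerm → Prop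
  | root {t u : CTerm} : R t u → CSpine R t u
  | appL (p : Player) {t t' : CTerm} (u : CTerm) : CSpine R t t' → CSpine R (.app p t u) (.app p t' u)

/-- Closure under checkers head contexts `λ_{p1}x1…λ_{pn}xn.⟨·⟩ @_{q1} t1 … @_{qk} tk`. -/
inductive CHead (R : CTerm → CTerm → Prop) : CTerm → CTerm → Prop
  | spine {t u : CTerm} : CSpine R t u → CHead R t u
  | lam (p : Player) {t u : CTerm} : CHead R t u → CHead R (.lam p t) (.lam p u)

/-- Silent β-reduction `→τ`. -/
def StepTau : CTerm → CTerm → Prop := CFull SilentRoot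
/-- Interaction β-reduction `→⊛`. -/
def StepInt : CTerm → CTerm → Prop := CFull InterRoot
/-- Checkers β-reduction `→βch`. -/
def StepBch (t u : CTerm) : Prop := StepTau t u ∨ StepInt t u

/-- Silent head reduction `→hτ`. -/
def HStepTau : CTerm → CTerm → Prop := CHead SilentRoot
/-- Interaction head reduction `→h⊛`. -/
def HStepInt : CTerm → CTerm → Prop := CHead InterRoot
/-- Checkers head reduction `→hch`. -/
def HStepCh (t u : CTerm) : Prop := HStepTau t u ∨ HStepInt t u

/-- Checkers head normal form. -/
def CTerm.HNF (t : CTerm) : Prop := ∀ u, ¬ HStepCh t u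

/-- `BigStep t k` means `t ⇓^k`: the (deterministic) checkers head evaluation of `t`
terminates and performs exactly `k` interaction steps. -/
inductive BigStep : CTerm → ℕ → Prop
  | nf {t : CTerm} : t.HNF → BigStep t 0
  | silent {t u : CTerm} {k : ℕ} : HStepTau t u → BigStep u k → BigStep t k
  | inter {t u : CTerm} {k : ℕ} : HStepInt t u → BigStep u k → BigStep t (k + 1)

/-- `HRed t n i u`: a checkers head reduction sequence from `t` to `u` of length `n`
containing exactly `i` interaction steps. -/
inductive HRed : CTerm → ℕ → ℕ → CTerm → Prop
  | refl (t : CTerm) : HRed t 0 0 t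
  | silent {t u s : CTerm} {n i : ℕ} : HStepTau t u → HRed u n i s → HRed t (n + 1) i s
  | inter {t u s : CTerm} {n i : ℕ} : HStepInt t u → HRed u n i s → HRed t (n + 1) (i + 1) s

/-- Checkers contexts (one hole). -/
inductive CCtx : Type
  | hole : CCtx
  | lam : Player → CCtx → CCtx
  | appL : Player → CCtx → CTerm → CCtx
  | appR : Player → CTerm → CCtx → CCtx

/-- Plugging (allowing variable capture). -/
def CCtx.fill : CCtx → CTerm → CTerm
  | .hole, t => t
  | .lam p C, t => .lam p (C.fill t)
  | .appL p C u, t => .app p (C.fill t) u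
  | .appR p s C, t => .app p s (C.fill t)

/-- Player lifting of ordinary contexts. -/
def LCtx.tag : LCtx → Player → CCtx
  | .hole, _ => .hole
  | .lam C, p => .lam p (C.tag p)
  | .appL C u, p => .appL p (C.tag p) (u.tag p)
  | .appR s C, p => .appR p (s.tag p) (C.tag p)

/-- Checkers interaction preorder `≼ctx⊛` on checkers terms. -/
def IntCtxLe (t u : CTerm) : Prop :=
  ∀ (C : CCtx) (k : ℕ), BigStep (C.fill t) k → BigStep (C.fill u) k

/-- Checkers interaction improvement `≼imp⊛` on checkers terms. -/
def ImpCtxLe (t u : CTerm) : Prop :=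
  ∀ (C : CCtx) (k : ℕ), BigStep (C.fill t) k → ∃ k', k' ≤ k ∧ BigStep (C.fill u) k'

/-- Interaction preorder `⊑int` on ordinary λ-terms, via black lifting. -/
def IntLe (t u : Lam) : Prop := IntCtxLe (t.tag .black) (u.tag .black)

/-- Interaction improvement `⊑int·imp` on ordinary λ-terms, via black lifting. -/
def ImpLe (t u : Lam) : Prop := ImpCtxLe (t.tag .black) (u.tag .black)

/-- Interaction equivalence `≡int`. -/
def IntEq (t u : Lam) : Prop := IntLe t u ∧ IntLe u t

/-- Silent conversion `=τ`: reflexive-symmetric-transitive closure of `→τ`. -/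
def SilentConv : CTerm → CTerm → Prop :=
  Relation.ReflTransGen (fun a b => StepTau a b ∨ StepTau b a)



namespace CTerm

theorem lift_lift (t : CTerm) : ∀ i j, i ≤ j →
    (t.liftAt i).liftAt (j + 1) = (t.liftAt j).liftAt i := by
  induction t with
  | var n => intro i j h; simp only [liftAt]; congr 1; grind
  | lam p t ih => intro i j h; simp only [liftAt]; rw [ih (i+1) (j+1) (by omega)]
  | app p t u ih1 ih2 => intro i j h; simp only [liftAt]; rw [ih1 i j h, ih2 i j h]

theorem lift_subst_ge (t : CTerm) : ∀ x d u, x ≤ d →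
    (t.subst x u).liftAt d = (t.liftAt (d + 1)).subst x (u.liftAt d) := by
  induction t with
  | var n =>
    intro x d u h
    simp only [subst, liftAt]
    grind [liftAt]
  | lam p t ih =>
    intro x d u h; simp only [liftAt, subst]
    rw [ih (x+1) (d+1) _ (by omega), lift_lift u 0 d (by omega)]
  | app p t s ih1 ih2 => intro x d u h; simp only [liftAt, subst]; rw [ih1 _ _ _ h, ih2 _ _ _ h]

theorem lift_subst_le (t : CTerm) : ∀ x d u, d ≤ x →
    (t.subst x u).liftAt d = (t.liftAt d).subst (x + 1) (u.liftAt d) := by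
  induction t with
  | var n =>
    intro x d u h
    simp only [subst, liftAt]
    grind [liftAt]
  | lam p t ih =>
    intro x d u h; simp only [liftAt, subst]
    rw [ih (x+1) (d+1) _ (by omega), lift_lift u 0 d (by omega)]
  | app p t s ih1 ih2 => intro x d u h; simp only [liftAt, subst]; rw [ih1 _ _ _ h, ih2 _ _ _ h]

theorem subst_lift (t : CTerm) : ∀ x u, (t.liftAt x).subst x u = t := by
  induction t with
  | var n =>
    intro x u
    simp only [subst, liftAt]
    grind
  | lam p t ih => intro x u; simp only [liftAt, subst]; rw [ih]
  | app p t s ih1 ih2 => intro x u; simp only [liftAt, subst]; rw [ih1, ih2]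

theorem subst_subst (t : CTerm) : ∀ j x b u, j ≤ x →
    (t.subst j b).subst x u = (t.subst (x + 1) (u.liftAt j)).subst j (b.subst x u) := by
  induction t with
  | var n =>
    intro j x b u h
    simp only [subst]
    grind [subst, subst_lift]
  | lam p t ih =>
    intro j x b u h; simp only [subst]
    rw [ih (j+1) (x+1) _ _ (by omega), lift_lift u 0 j (by omega), lift_subst_le b x 0 u (by omega)]
  | app p t s ih1 ih2 => intro j x b u h; simp only [subst]; rw [ih1 _ _ _ _ h, ih2 _ _ _ _ h]

end CTerm

theorem Lam.tag_lift (p : Player) (t : Lam) : ∀ d, (t.liftAt d).tag p = (t.tag p).liftAt d := by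
  induction t with
  | var n => intro d; rfl
  | lam t ih => intro d; simp only [Lam.liftAt, Lam.tag, CTerm.liftAt, ih]
  | app t u ih1 ih2 => intro d; simp only [Lam.liftAt, Lam.tag, CTerm.liftAt, ih1, ih2]

theorem Lam.tag_subst (p : Player) (t : Lam) :
    ∀ x u, (t.subst x u).tag p = (t.tag p).subst x (u.tag p) := by
  induction t with
  | var n =>
    intro x u; simp only [Lam.subst, Lam.tag, CTerm.subst]
    split_ifs <;> rfl
  | lam t ih => intro x u; simp only [Lam.subst, Lam.tag, CTerm.subst, ih, Lam.tag_lift]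
  | app t u ih1 ih2 => intro x u; simp only [Lam.subst, Lam.tag, CTerm.subst, ih1, ih2]

theorem LBeta.tag_step {p : Player} {t u : Lam} (h : LBeta t u) :
    StepTau (t.tag p) (u.tag p) := by
  unfold LBeta at h
  induction h with
  | root h =>
    cases h with
    | beta t u => rw [Lam.tag_subst]; exact CFull.root (SilentRoot.beta _ _ _)
  | lam _ ih => exact CFull.lam _ ih
  | appL u _ ih => exact CFull.appL _ _ ih
  | appR u _ ih => exact CFull.appR _ _ ih

theorem StepTau.fill {t u : CTerm} (h : StepTau t u) (C : CCtx) :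
    StepTau (C.fill t) (C.fill u) := by
  induction C with
  | hole => exact h
  | lam p C ih => exact CFull.lam _ ih
  | appL p C s ih => exact CFull.appL _ _ ih
  | appR p s C ih => exact CFull.appR _ _ ih

/-- Silent spine (weak head) multistep. -/
abbrev WSteps : CTerm → CTerm → Prop := Relation.ReflTransGen (CSpine SilentRoot)

theorem WSteps.appL {t t' : CTerm} (p : Player) (u : CTerm) (h : WSteps t t') :
    WSteps (.app p t u) (.app p t' u) :=
  Relation.ReflTransGen.lift (fun t => CTerm.app p t u) (fun _ _ h => CSpine.appL p u h) _ _ h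

theorem WSteps.lift {t t' : CTerm} (d : ℕ) (h : WSteps t t') :
    WSteps (t.liftAt d) (t'.liftAt d) := by
  refine Relation.ReflTransGen.lift (fun t => CTerm.liftAt t d) (fun a b h => ?_) _ _ h
  show CSpine _ (a.liftAt d) (b.liftAt d)
  induction h with
  | root h =>
    cases h with
    | beta p t u =>
      rw [CTerm.lift_subst_ge _ _ _ _ (Nat.zero_le d)]
      exact CSpine.root (SilentRoot.beta _ _ _)
  | appL p u _ ih => exact CSpine.appL _ _ ih

theorem WSteps.subst {t t' : CTerm} (x : ℕ) (u : CTerm) (h : WSteps t t') :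
    WSteps (t.subst x u) (t'.subst x u) := by
  refine Relation.ReflTransGen.lift (fun t => CTerm.subst t x u) (fun a b h => ?_) _ _ h
  show CSpine _ (a.subst x u) (b.subst x u)
  induction h with
  | root h =>
    cases h with
    | beta p t s =>
      rw [CTerm.subst_subst _ _ _ _ _ (Nat.zero_le x)]
      exact CSpine.root (SilentRoot.beta _ _ _)
  | appL p u _ ih => exact CSpine.appL _ _ ih

/-- Standard silent reduction, in the style of Kashima. -/
inductive St : CTerm → CTerm → Prop
  | var {t : CTerm} {n : ℕ} : WSteps t (.var n) → St t (.var n)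
  | lam {t a a' : CTerm} {p : Player} : WSteps t (.lam p a) → St a a' → St t (.lam p a')
  | app {t a a' b b' : CTerm} {p : Player} :
      WSteps t (.app p a b) → St a a' → St b b' → St t (.app p a' b')

theorem St.refl (t : CTerm) : St t t := by
  induction t with
  | var n => exact .var .refl
  | lam p t ih => exact .lam .refl ih
  | app p t u ih1 ih2 => exact .app .refl ih1 ih2

theorem St.prepend {t s u : CTerm} (h : WSteps t s) (h' : St s u) : St t u := by
  cases h' with
  | var h1 => exact .var (h.trans h1)
  | lam h1 h2 => exact .lam (h.trans h1) h2
  | app h1 h2 h3 => exact .app (h.trans h1) h2 h3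

theorem St.lift {t u : CTerm} (h : St t u) : ∀ d, St (t.liftAt d) (u.liftAt d) := by
  induction h with
  | var h => intro d; exact St.prepend (h.lift d) (St.refl _)
  | lam h _ ih => intro d; exact St.lam (h.lift d) (ih _)
  | app h _ _ ih1 ih2 => intro d; exact St.app (h.lift d) (ih1 _) (ih2 _)

theorem St.subst {t t' : CTerm} (h : St t t') :
    ∀ x u u', St u u' → St (t.subst x u) (t'.subst x u') := by
  induction h with
  | @var t n h =>
    intro x u u' hu
    refine St.prepend (h.subst x u) ?_
    simp only [CTerm.subst]
    split_ifs
    · exact hu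
    · exact St.refl _
    · exact St.refl _
  | lam h _ ih => intro x u u' hu; exact St.lam (h.subst x u) (ih _ _ _ (hu.lift 0))
  | app h _ _ ih1 ih2 =>
    intro x u u' hu; exact St.app (h.subst x u) (ih1 _ _ _ hu) (ih2 _ _ _ hu)

theorem St.of_step {t u : CTerm} (h : StepTau t u) : St t u := by
  unfold StepTau at h
  induction h with
  | root h => exact St.prepend (.single (CSpine.root h)) (St.refl _)
  | lam p _ ih => exact St.lam .refl ih
  | appL p u _ ih => exact St.app .refl ih (St.refl _)
  | appR p t _ ih => exact St.app .refl (St.refl _) ih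

/-- The two kinds of root rules. -/
def IsKind (R : CTerm → CTerm → Prop) : Prop := R = SilentRoot ∨ R = InterRoot

theorem fire (p q : Player) : ∃ R, IsKind R ∧ ∀ t u, R (.app q (.lam p t) u) (t.subst 0 u) := by
  by_cases h : q = p
  · subst h; exact ⟨_, .inl rfl, fun t u => .beta _ _ _⟩
  · have : q = p.op := by cases p <;> cases q <;> simp_all [Player.op]
    subst this; exact ⟨_, .inr rfl, fun t u => .beta _ _ _⟩

/-- Applications and variables without spine steps. -/
def Neutral (t : CTerm) : Prop :=
  (∀ p a, t ≠ .lam p a) ∧ ∀ R, IsKind R → ∀ u, ¬ CSpine R t u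

theorem Neutral.var (n : ℕ) : Neutral (.var n) := by
  refine ⟨by simp, ?_⟩
  rintro R hR u h
  cases h with
  | root h => rcases hR with rfl | rfl <;> cases h

theorem Neutral.app {t : CTerm} (h : Neutral t) (p : Player) (u : CTerm) :
    Neutral (.app p t u) := by
  refine ⟨by simp, ?_⟩
  rintro R hR s hs
  cases hs with
  | root hs => rcases hR with rfl | rfl <;> cases hs <;> exact h.1 _ _ rfl
  | appL _ _ hs => exact h.2 R hR _ hs

theorem CTerm.HNF.iff {t : CTerm} : t.HNF ↔ ∀ R, IsKind R → ∀ u, ¬ CHead R t u := by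
  constructor
  · rintro h R (rfl | rfl) u hu
    · exact h u (.inl hu)
    · exact h u (.inr hu)
  · rintro h u (hu | hu)
    · exact h _ (.inl rfl) _ hu
    · exact h _ (.inr rfl) _ hu

theorem Neutral.hnf {t : CTerm} (h : Neutral t) : t.HNF := by
  rw [CTerm.HNF.iff]
  intro R hR u hu
  cases hu with
  | spine hu => exact h.2 R hR _ hu
  | lam => exact h.1 _ _ rfl

theorem spine_lam {R : CTerm → CTerm → Prop} (hR : IsKind R) {p : Player} {t u : CTerm} :
    ¬ CSpine R (.lam p t) u := by
  intro h
  cases h with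
  | root h => rcases hR with rfl | rfl <;> cases h

theorem hnf_lam {t : CTerm} (h : t.HNF) (p : Player) : (CTerm.lam p t).HNF := by
  rw [CTerm.HNF.iff] at *
  intro R hR u hu
  cases hu with
  | spine hu => exact spine_lam hR hu
  | lam _ hu => exact h R hR _ hu

theorem root_det {R R' : CTerm → CTerm → Prop} (hR : IsKind R) (hR' : IsKind R')
    {t a b : CTerm} (h : R t a) (h' : R' t b) : R = R' ∧ a = b := by
  rcases hR with rfl | rfl <;> rcases hR' with rfl | rfl
  · cases h; cases h'; exact ⟨rfl, rfl⟩
  · exfalso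
    cases h with
    | beta p t u =>
      generalize hq : CTerm.app p (.lam p t) u = s at h'
      cases h' with
      | beta q => simp at hq; obtain ⟨h1, ⟨h2, _⟩, _⟩ := hq; subst h2; cases p <;> simp [Player.op] at h1
  · exfalso
    cases h' with
    | beta p t u =>
      generalize hq : CTerm.app p (.lam p t) u = s at h
      cases h with
      | beta q => simp at hq; obtain ⟨h1, ⟨h2, _⟩, _⟩ := hq; subst h2; cases p <;> simp [Player.op] at h1
  · cases h with
    | beta p t u =>
      generalize hq : CTerm.app p.op (.lam p t) u = s at h'
      cases h' with
      | beta q => simp at hq; obtain ⟨h1, ⟨h2, h3⟩, h4⟩ := hq; subst h3 h4; exact ⟨rfl, rfl⟩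

theorem root_app {R : CTerm → CTerm → Prop} (hR : IsKind R) {q : Player} {t u a : CTerm}
    (h : R (.app q t u) a) : ∃ p s, t = .lam p s := by
  rcases hR with rfl | rfl <;> cases h <;> exact ⟨_, _, rfl⟩

theorem spine_det {R R' : CTerm → CTerm → Prop} (hR : IsKind R) (hR' : IsKind R')
    {t a b : CTerm} (h : CSpine R t a) (h' : CSpine R' t b) : R = R' ∧ a = b := by
  induction h generalizing b with
  | root h =>
    cases h' with
    | root h' => exact root_det hR hR' h h'
    | appL p u h' =>
      obtain ⟨q, s, rfl⟩ := root_app hR h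
      exact absurd h' (spine_lam hR')
  | appL p u h ih =>
    cases h' with
    | root h' =>
      obtain ⟨q, s, rfl⟩ := root_app hR' h'
      exact absurd h (spine_lam hR)
    | appL p u h' =>
      obtain ⟨h1, h2⟩ := ih h'
      exact ⟨h1, by rw [h2]⟩

theorem head_det {R R' : CTerm → CTerm → Prop} (hR : IsKind R) (hR' : IsKind R')
    {t a b : CTerm} (h : CHead R t a) (h' : CHead R' t b) : R = R' ∧ a = b := by
  induction h generalizing b with
  | spine h =>
    cases h' with
    | spine h' => exact spine_det hR hR' h h'
    | lam => exact absurd h (spine_lam hR)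
  | lam p h ih =>
    cases h' with
    | spine h' => exact absurd h' (spine_lam hR')
    | lam _ h' =>
      obtain ⟨h1, h2⟩ := ih h'
      exact ⟨h1, by rw [h2]⟩

theorem St.simW {t u : CTerm} (h : St t u) : ∃ s, WSteps t s ∧
    ((∃ p c c', s = .lam p c ∧ u = .lam p c' ∧ St c c') ∨
     (Neutral s ∧ Neutral u) ∨
     (∃ R s' u', IsKind R ∧ CSpine R s s' ∧ CSpine R u u' ∧ St s' u')) := by
  induction h with
  | @var t n h => exact ⟨_, h, .inr (.inl ⟨Neutral.var n, Neutral.var n⟩)⟩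
  | @lam t a a' p h ha ih => exact ⟨_, h, .inl ⟨_, _, _, rfl, rfl, ha⟩⟩
  | @app t a a' b b' p h ha hb ih1 ih2 =>
    obtain ⟨s, hs, h1⟩ := ih1
    refine ⟨.app p s b, h.trans (hs.appL p b), .inr ?_⟩
    rcases h1 with ⟨q, c, c', rfl, rfl, hc⟩ | ⟨n1, n2⟩ | ⟨R, s', u', hR, r1, r2, hsu⟩
    · obtain ⟨R, hR, hf⟩ := fire q p
      exact .inr ⟨R, _, _, hR, .root (hf _ _), .root (hf _ _), hc.subst 0 _ _ hb⟩
    · exact .inl ⟨n1.app _ _, n2.app _ _⟩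
    · exact .inr ⟨R, _, _, hR, .appL _ _ r1, .appL _ _ r2, .app .refl hsu hb⟩

/-- Head-evaluation bisimulation game. -/
def Game (t u : CTerm) : Prop := ∃ s, Relation.ReflTransGen HStepTau t s ∧
    ((s.HNF ∧ u.HNF) ∨
     (∃ R s' u', IsKind R ∧ CHead R s s' ∧ CHead R u u' ∧ St s' u'))

theorem WSteps.head {t u : CTerm} (h : WSteps t u) : Relation.ReflTransGen HStepTau t u :=
  Relation.ReflTransGen.mono (fun _ _ h => CHead.spine h) _ _ h

theorem St.game_of_not_lam {t u : CTerm} (h : St t u) (hu : ∀ p a, u ≠ .lam p a) : Game t u := by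
  obtain ⟨s, hs, h1⟩ := h.simW
  refine ⟨s, hs.head, ?_⟩
  rcases h1 with ⟨q, c, c', rfl, rfl, hc⟩ | ⟨n1, n2⟩ | ⟨R, s', u', hR, r1, r2, hsu⟩
  · exact absurd rfl (hu _ _)
  · exact .inl ⟨n1.hnf, n2.hnf⟩
  · exact .inr ⟨R, _, _, hR, .spine r1, .spine r2, hsu⟩

theorem St.game {t u : CTerm} (h : St t u) : Game t u := by
  induction h with
  | var h => exact (St.var h).game_of_not_lam (by simp)
  | app h h1 h2 => exact (St.app h h1 h2).game_of_not_lam (by simp)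
  | @lam t a a' p h ha ih =>
    obtain ⟨s, hs, h1⟩ := ih
    refine ⟨.lam p s, h.head.trans ?_, ?_⟩
    · exact Relation.ReflTransGen.lift (fun t => CTerm.lam p t) (fun _ _ h => CHead.lam p h) _ _ hs
    · rcases h1 with ⟨n1, n2⟩ | ⟨R, s', u', hR, r1, r2, hsu⟩
      · exact .inl ⟨hnf_lam n1 p, hnf_lam n2 p⟩
      · exact .inr ⟨R, _, _, hR, .lam p r1, .lam p r2, .lam .refl hsu⟩

theorem silent_ne_inter : SilentRoot ≠ InterRoot := by
  intro h
  have h1 : SilentRoot (.app .black (.lam .black (.var 0)) (.var 0)) (CTerm.subst (.var 0) 0 (.var 0)) :=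
    .beta _ _ _
  rw [h] at h1
  generalize hq : CTerm.app .black (.lam .black (.var 0)) (.var 0) = s at h1
  generalize CTerm.subst (.var 0) 0 (.var 0) = s' at h1
  cases h1 with
  | beta q => simp at hq; obtain ⟨h1, ⟨h2, _⟩, _⟩ := hq; subst h2; simp [Player.op] at h1

theorem BigStep.forward {t : CTerm} {k : ℕ} (h : BigStep t k) : ∀ u, Game t u → BigStep u k := by
  induction h with
  | nf h =>
    rintro u ⟨s, hs, h1⟩
    rcases hs.cases_head with rfl | ⟨c, hc, _⟩
    · rcases h1 with ⟨n1, n2⟩ | ⟨R, s', u', hR, r1, r2, hsu⟩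
      · exact .nf n2
      · exact absurd r1 (CTerm.HNF.iff.1 h R hR _)
    · exact absurd (.inl hc) (h c)
  | @silent t t1 k h hb ih =>
    rintro u ⟨s, hs, h1⟩
    rcases hs.cases_head with rfl | ⟨c, hc, hcs⟩
    · rcases h1 with ⟨n1, n2⟩ | ⟨R, s', u', hR, r1, r2, hsu⟩
      · exact absurd (.inl h) (n1 _)
      · obtain ⟨rfl, rfl⟩ := head_det (.inl rfl) hR h r1
        exact .silent r2 (ih _ hsu.game)
    · obtain ⟨_, rfl⟩ := head_det (.inl rfl) (.inl rfl) h hc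
      exact ih _ ⟨s, hcs, h1⟩
  | @inter t t1 k h hb ih =>
    rintro u ⟨s, hs, h1⟩
    rcases hs.cases_head with rfl | ⟨c, hc, hcs⟩
    · rcases h1 with ⟨n1, n2⟩ | ⟨R, s', u', hR, r1, r2, hsu⟩
      · exact absurd (.inr h) (n1 _)
      · obtain ⟨rfl, rfl⟩ := head_det (.inr rfl) hR h r1
        exact .inter r2 (ih _ hsu.game)
    · obtain ⟨h3, _⟩ := head_det (.inl rfl) (.inr rfl) hc h
      exact absurd h3 silent_ne_inter

theorem BigStep.prepend {t s : CTerm} {k : ℕ} (h : Relation.ReflTransGen HStepTau t s)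
    (hb : BigStep s k) : BigStep t k := by
  induction h using Relation.ReflTransGen.head_induction_on with
  | refl => exact hb
  | head h _ ih => exact .silent h ih

theorem BigStep.backward {u : CTerm} {k : ℕ} (h : BigStep u k) : ∀ t, Game t u → BigStep t k := by
  induction h with
  | nf h =>
    rintro t ⟨s, hs, h1⟩
    refine BigStep.prepend hs ?_
    rcases h1 with ⟨n1, n2⟩ | ⟨R, s', u', hR, r1, r2, hsu⟩
    · exact .nf n1
    · exact absurd r2 (CTerm.HNF.iff.1 h R hR _)
  | @silent t t1 k h hb ih =>
    rintro t ⟨s, hs, h1⟩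
    refine BigStep.prepend hs ?_
    rcases h1 with ⟨n1, n2⟩ | ⟨R, s', u', hR, r1, r2, hsu⟩
    · exact absurd (.inl h) (n2 _)
    · obtain ⟨rfl, rfl⟩ := head_det (.inl rfl) hR h r2
      exact .silent r1 (ih _ hsu.game)
  | @inter t t1 k h hb ih =>
    rintro t ⟨s, hs, h1⟩
    refine BigStep.prepend hs ?_
    rcases h1 with ⟨n1, n2⟩ | ⟨R, s', u', hR, r1, r2, hsu⟩
    · exact absurd (.inr h) (n2 _)
    · obtain ⟨rfl, rfl⟩ := head_det (.inr rfl) hR h r2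
      exact .inter r1 (ih _ hsu.game)

theorem LCtx.tag_fill (p : Player) (C : LCtx) (t : Lam) :
    (C.fill t).tag p = (C.tag p).fill (t.tag p) := by
  induction C with
  | hole => rfl
  | lam C ih => simp only [LCtx.fill, LCtx.tag, Lam.tag, CCtx.fill, ih]
  | appL C u ih => simp only [LCtx.fill, LCtx.tag, Lam.tag, CCtx.fill, ih]
  | appR u C ih => simp only [LCtx.fill, LCtx.tag, Lam.tag, CCtx.fill, ih]

/-- Composition of checkers contexts. -/
def CCtx.comp : CCtx → CCtx → CCtx
  | .hole, D => D
  | .lam p C, D => .lam p (C.comp D)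
  | .appL p C u, D => .appL p (C.comp D) u
  | .appR p s C, D => .appR p s (C.comp D)

theorem CCtx.comp_fill (C D : CCtx) (t : CTerm) : (C.comp D).fill t = C.fill (D.fill t) := by
  induction C with
  | hole => rfl
  | lam p C ih => simp only [CCtx.comp, CCtx.fill, ih]
  | appL p C u ih => simp only [CCtx.comp, CCtx.fill, ih]
  | appR p u C ih => simp only [CCtx.comp, CCtx.fill, ih]

def omegaHalf : Lam := .lam (.app (.var 0) (.var 0))

def omegaTerm : Lam := .app omegaHalf omegaHalf

theorem omega_step : HStepTau (omegaTerm.tag .black) (omegaTerm.tag .black) :=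
  .spine (.root (SilentRoot.beta .black (.app .black (.var 0) (.var 0)) (omegaHalf.tag .black)))

theorem omega_diverges {t : CTerm} {k : ℕ} (h : BigStep t k) : t ≠ omegaTerm.tag .black := by
  induction h with
  | nf h => rintro rfl; exact h _ (.inl omega_step)
  | silent h _ ih =>
    rintro rfl; exact ih (head_det (.inl rfl) (.inl rfl) h omega_step).2
  | inter h _ ih =>
    rintro rfl; exact ih (head_det (.inr rfl) (.inl rfl) h omega_step).2

/-- The interaction improvement `⊑int·imp` is a consistent inequational λ-theory:
a compatible preorder containing β-conversion and different from the total relation. -/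
theorem impLe_consistent_inequational_theory :
    (∀ t, ImpLe t t) ∧
    (∀ t u s, ImpLe t u → ImpLe u s → ImpLe t s) ∧
    (∀ t u, ImpLe t u → ∀ C : LCtx, ImpLe (C.fill t) (C.fill u)) ∧
    (∀ t u, LBetaConv t u → ImpLe t u) ∧
    (∃ t u, ¬ ImpLe t u) := by
  have hrefl : ∀ t, ImpLe t t := fun t C k h => ⟨k, le_rfl, h⟩
  have htrans : ∀ t u s, ImpLe t u → ImpLe u s → ImpLe t s := by
    intro t u s h1 h2 C k h
    obtain ⟨k1, hk1, h3⟩ := h1 C k h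
    obtain ⟨k2, hk2, h4⟩ := h2 C k1 h3
    exact ⟨k2, hk2.trans hk1, h4⟩
  refine ⟨hrefl, htrans, ?_, ?_, ?_⟩
  · intro t u h C D k hb
    rw [LCtx.tag_fill, ← CCtx.comp_fill] at *
    exact h _ k hb
  · intro t u h
    unfold LBetaConv at h
    induction h with
    | refl => exact hrefl t
    | tail _ h ih =>
      refine htrans _ _ _ ih ?_
      intro C k hb
      refine ⟨k, le_rfl, ?_⟩
      rcases h with h | h
      · exact hb.forward _ (St.of_step (h.tag_step.fill C)).game
      · exact hb.backward _ (St.of_step (h.tag_step.fill C)).game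
  · refine ⟨.var 0, omegaTerm, fun h => ?_⟩
    obtain ⟨k, _, hb⟩ := h .hole 0 (.nf (Neutral.var 0).hnf)
    exact omega_diverges hb rfl
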